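/- For weak compositions a and b of length n, the product of monomial slide polynomials expands as 𝔐_a · 𝔐_b = Σ_c [c | a ⧻ b] 𝔐_c, where [c | a ⧻ b] is the multiplicity of the weak composition c in the quasi-slide product a ⧻ b. -/

import Mathlib

open scoped Classical

namespace SlidePaper

/-- Sum of the first `i` entries of a weak composition of length `n`. -/
def psum {n : ℕ} (a : Fin n → ℕ) (i : ℕ) : ℕ :=
  ∑ j ∈ Finset.univ.filter (fun j : Fin n => (j : ℕ) < i), a j

/-- `b` dominates `a`: all partial sums of `b` are at least those of `a`. -/
def Dominates {n : ℕ} (b a : Fin n → ℕ) : Prop :=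
  ∀ i : Fin (n + 1), psum a i ≤ psum b i

/-- The flattening of a weak composition: the list of its nonzero entries in order. -/
def flat {n : ℕ} (a : Fin n → ℕ) : List ℕ :=
  (List.ofFn a).filter (fun x => x ≠ 0)

/-- `β` refines `α`: `β` splits into consecutive blocks with sums `α₁, α₂, …`. -/
def Refines (β α : List ℕ) : Prop :=
  ∃ L : List (List ℕ), L.flatten = β ∧ L.map List.sum = α

/-- All weak compositions of length `n` with entries at most `k`. -/
def wcFinset (n k : ℕ) : Finset (Fin n → ℕ) :=
  Fintype.piFinset fun _ => Finset.range (k + 1)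

/-- The monomial slide polynomial `𝔐_a`. -/
noncomputable def slideM {n : ℕ} (a : Fin n → ℕ) : MvPolynomial (Fin n) ℤ :=
  ∑ b ∈ (wcFinset n (∑ i, a i)).filter (fun b => Dominates b a ∧ flat b = flat a),
    MvPolynomial.monomial (Finsupp.equivFunOnFinite.symm b) 1

/-- The fundamental slide polynomial `𝔉_a`. -/
noncomputable def slideF {n : ℕ} (a : Fin n → ℕ) : MvPolynomial (Fin n) ℤ :=
  ∑ b ∈ (wcFinset n (∑ i, a i)).filter (fun b => Dominates b a ∧ Refines (flat b) (flat a)),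
    MvPolynomial.monomial (Finsupp.equivFunOnFinite.symm b) 1

/-- A weak composition is quasi-flat if its nonzero entries occupy consecutive positions. -/
def QuasiFlat {n : ℕ} (a : Fin n → ℕ) : Prop :=
  ∀ i j l : Fin n, i ≤ j → j ≤ l → a i ≠ 0 → a l ≠ 0 → a j ≠ 0

/-- `b` strongly dominates `a`. -/
def StronglyDominates {n : ℕ} (b a : Fin n → ℕ) : Prop :=
  Dominates b a ∧ ∀ c : Fin n → ℕ, Dominates c a → flat c = flat b → Dominates c b

/-- The exponent vector placing the parts of `α` at the positions `i`. -/
noncomputable def placeExp {n : ℕ} (α : List ℕ) (i : Fin α.length → Fin n) : Fin n →₀ ℕ :=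
  ∑ t : Fin α.length, Finsupp.single (i t) (α.get t)

/-- `f` is quasisymmetric in the variables `x_1, …, x_k` (0-indexed: `x_0, …, x_{k-1}`). -/
def IsQuasisymmetricIn {n : ℕ} (k : ℕ) (f : MvPolynomial (Fin n) ℤ) : Prop :=
  ∀ α : List ℕ, (∀ x ∈ α, 0 < x) →
    ∀ i j : Fin α.length → Fin n, StrictMono i → StrictMono j →
      (∀ t, (i t : ℕ) < k) → (∀ t, (j t : ℕ) < k) →
      MvPolynomial.coeff (placeExp α i) f = MvPolynomial.coeff (placeExp α j) f

/-- The monomial quasisymmetric polynomial `M_α(x_1, …, x_k)` inside `ℤ[x_1, …, x_n]`. -/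
noncomputable def Mqs (n k : ℕ) (α : List ℕ) : MvPolynomial (Fin n) ℤ :=
  ∑ i ∈ (Finset.univ : Finset (Fin α.length → Fin n)).filter
      (fun i : Fin α.length → Fin n => StrictMono i ∧ ∀ t, (i t : ℕ) < k),
    ∏ t : Fin α.length, (MvPolynomial.X (i t) : MvPolynomial (Fin n) ℤ) ^ α.get t

/-- The fundamental quasisymmetric polynomial `F_α(x_1, …, x_k)` inside `ℤ[x_1, …, x_n]`. -/
noncomputable def Fqs (n k : ℕ) (α : List ℕ) : MvPolynomial (Fin n) ℤ :=
  ∑ c ∈ (Finset.univ : Finset (Composition α.sum)).filter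
      (fun c => Refines c.blocks α ∧ c.blocks.length ≤ k),
    Mqs n k c.blocks

/-- Place the weak composition `a` (of length `N`) at offset `k` inside length `M`. -/
def shiftComp {N : ℕ} (k M : ℕ) (a : Fin N → ℕ) : Fin M → ℕ :=
  fun i => if h : k ≤ (i : ℕ) ∧ (i : ℕ) - k < N then a ⟨(i : ℕ) - k, h.2⟩ else 0

/-- Spread the values `g` to positions `ι` inside a weak composition of length `n`. -/
def spread {l n : ℕ} (ι : Fin l → Fin n) (g : Fin l → ℕ) : Fin n → ℕ :=
  fun i => ∑ k, if ι k = i then g k else 0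

/-- The monomial quasisymmetric function `M_α` in infinitely many variables. -/
noncomputable def MqsFun (α : List ℕ) : MvPowerSeries ℕ ℤ :=
  fun d => if ∃ i : Fin α.length → ℕ, StrictMono i ∧
      d = ∑ t : Fin α.length, Finsupp.single (i t) (α.get t) then 1 else 0

/-- The fundamental quasisymmetric function `F_α` in infinitely many variables. -/
noncomputable def FqsFun (α : List ℕ) : MvPowerSeries ℕ ℤ :=
  ∑ c ∈ (Finset.univ : Finset (Composition α.sum)).filter (fun c => Refines c.blocks α),
    MqsFun c.blocks

/-- The cells of the Young diagram of `lam` (French notation): row `r` (from the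
bottom, 0-indexed) has `lam.get r` cells. -/
abbrev Cells (lam : List ℕ) := Σ r : Fin lam.length, Fin (lam.get r)

/-- A filling of `lam` with entries in `{1, …, n}` (encoded as `Fin n`) is a semistandard
Young tableau: rows weakly increase left to right, columns strictly increase bottom to top. -/
def IsSSYT {n : ℕ} {lam : List ℕ} (T : Cells lam → Fin n) : Prop :=
  (∀ (r : Fin lam.length) (c c' : Fin (lam.get r)), c ≤ c' → T ⟨r, c⟩ ≤ T ⟨r, c'⟩) ∧
  (∀ (r r' : Fin lam.length) (c' : Fin (lam.get r')) (h : (c' : ℕ) < lam.get r),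
      (r : ℕ) < (r' : ℕ) → T ⟨r, ⟨c', h⟩⟩ < T ⟨r', c'⟩)

/-- The weight of a filling: the `v`-th entry counts the occurrences of the value `v`. -/
def wtT {n : ℕ} {lam : List ℕ} (T : Cells lam → Fin n) : Fin n → ℕ :=
  fun v => (Finset.univ.filter (fun x : Cells lam => T x = v)).card

/-- A filling is quasi-Yamanouchi if for every value `v > 1`, the leftmost occurrence of `v`
lies weakly left of some occurrence of `v - 1`. -/
def IsQY {n : ℕ} {lam : List ℕ} (T : Cells lam → Fin n) : Prop :=
  ∀ (v : Fin n) (x : Cells lam), T x = v → 0 < (v : ℕ) →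
    (∀ y : Cells lam, T y = v → (x.2 : ℕ) ≤ (y.2 : ℕ)) →
    ∃ z : Cells lam, (T z : ℕ) + 1 = (v : ℕ) ∧ (x.2 : ℕ) ≤ (z.2 : ℕ)

/-- The Schur polynomial `s_lam(x_1, …, x_n)` as the generating function of
semistandard Young tableaux. -/
noncomputable def schurPoly (n : ℕ) (lam : List ℕ) : MvPolynomial (Fin n) ℤ :=
  ∑ T ∈ (Finset.univ : Finset (Cells lam → Fin n)).filter (fun T => IsSSYT T),
    MvPolynomial.monomial (Finsupp.equivFunOnFinite.symm (wtT T)) 1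

/-- One destandardization step on fillings: for some value `v` occurring in `T` whose
leftmost occurrence is strictly right of every occurrence of `v - 1`, every `v` is
decremented to `v - 1`. -/
def TabStep {n : ℕ} {lam : List ℕ} (T T' : Cells lam → Fin n) : Prop :=
  ∃ v : Fin n, 0 < (v : ℕ) ∧ (∃ x, T x = v) ∧
    (∀ x y : Cells lam, T x = v → (T y : ℕ) + 1 = (v : ℕ) → (y.2 : ℕ) < (x.2 : ℕ)) ∧
    ∀ x : Cells lam, (T' x : ℕ) = if T x = v then (v : ℕ) - 1 else (T x : ℕ)

/-- The reading word of a set of crosses: rows are read from top to bottom, each row from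
left to right, the cross in (0-indexed) row `i` and column `j` recording the letter `i + j`
(representing the simple transposition swapping `i + j` and `i + j + 1` of `{0, 1, 2, …}`). -/
def readWord (P : Finset (ℕ × ℕ)) : List ℕ :=
  ((List.range (P.sup Prod.fst + 1)).reverse).flatMap
    (fun i => ((List.range (P.sup Prod.snd + 1)).filter (fun j => decide ((i, j) ∈ P))).map
      (fun j => i + j))

/-- The permutation `s_{i_ℓ} ⋯ s_{i_1}` associated to the word `(i_1, …, i_ℓ)`,
where `s_k` swaps `k` and `k + 1`. -/
def wordPerm (l : List ℕ) : Equiv.Perm ℕ :=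
  ((l.map (fun k => Equiv.swap k (k + 1))).reverse).prod

/-- A word is reduced if no shorter word has the same product. -/
def IsReducedWord (l : List ℕ) : Prop :=
  ∀ l' : List ℕ, wordPerm l' = wordPerm l → l.length ≤ l'.length

/-- `P` is a reduced pipe dream of shape `w`: the pipes trace out `w` and no two pipes
cross more than once, equivalently the reading word of `P` is a reduced word for `w`. -/
def IsPD (w : Equiv.Perm ℕ) (P : Finset (ℕ × ℕ)) : Prop :=
  wordPerm (readWord P) = w ∧ IsReducedWord (readWord P)

/-- `P` is a quasi-Yamanouchi pipe dream of shape `w`: for every row, the westernmost cross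
is in the first column or lies weakly west of some cross in the row above. -/
def IsQPD (w : Equiv.Perm ℕ) (P : Finset (ℕ × ℕ)) : Prop :=
  IsPD w P ∧ ∀ i j : ℕ, (i, j) ∈ P → (∀ j', (i, j') ∈ P → j ≤ j') →
    (j = 0 ∨ ∃ j', (i + 1, j') ∈ P ∧ j ≤ j')

/-- One destandardization step on pipe dreams: a row with no cross in the first column,
all of whose crosses lie strictly east of every cross in the row above, has all its
crosses moved one step northwest. -/
def PDStep (P P' : Finset (ℕ × ℕ)) : Prop :=
  ∃ r : ℕ, (∃ j, (r, j) ∈ P) ∧ (r, 0) ∉ P ∧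
    (∀ j j', (r, j) ∈ P → (r + 1, j') ∈ P → j' < j) ∧
    P' = P.filter (fun p => p.1 ≠ r) ∪
      (P.filter (fun p => p.1 = r)).image (fun p => (r + 1, p.2 - 1))

/-- The number of crosses of `P` in (0-indexed) row `i`. -/
def rowWt (P : Finset (ℕ × ℕ)) (i : ℕ) : ℕ := (P.filter (fun p => p.1 = i)).card

/-- The weight of a pipe dream, as a weak composition of length `n`. -/
def wtFin (n : ℕ) (P : Finset (ℕ × ℕ)) : Fin n → ℕ := fun i => rowWt P (i : ℕ)

/-- The flattened weight of a pipe dream: the list of nonzero row counts, bottom row first. -/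
def flatWt (P : Finset (ℕ × ℕ)) : List ℕ :=
  ((List.range (P.sup Prod.fst + 1)).map (rowWt P)).filter (fun x => x ≠ 0)

/-- The Schubert polynomial of `w` in the variables `x_1, …, x_n`, as the generating
function of reduced pipe dreams of shape `w`. -/
noncomputable def SchubertPoly (n : ℕ) (w : Equiv.Perm ℕ) : MvPolynomial (Fin n) ℤ :=
  ∑ᶠ P ∈ {P : Finset (ℕ × ℕ) | IsPD w P},
    MvPolynomial.monomial (Finsupp.equivFunOnFinite.symm (wtFin n P)) 1

/-- The Lehmer code of `w` (0-indexed): `lehmer w i` counts `j > i` with `w j < w i`. -/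
noncomputable def lehmer (w : Equiv.Perm ℕ) (i : ℕ) : ℕ :=
  Set.ncard {j : ℕ | i < j ∧ w j < w i}

/-- The Lehmer code of `w` as a weak composition of length `n`. -/
noncomputable def lehmerFin (n : ℕ) (w : Equiv.Perm ℕ) : Fin n → ℕ :=
  fun i => lehmer w (i : ℕ)

/-- The number of inversions of `w`. -/
noncomputable def invCount (w : Equiv.Perm ℕ) : ℕ :=
  Set.ncard {p : ℕ × ℕ | p.1 < p.2 ∧ w p.2 < w p.1}

/-- The largest entry of the Lehmer code of `w`. -/
noncomputable def maxLehmer (w : Equiv.Perm ℕ) : ℕ :=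
  sSup (Set.range (lehmer w))

/-- The (0-indexed) position of the first descent of `w`. -/
noncomputable def firstDescent (w : Equiv.Perm ℕ) : ℕ :=
  sInf {i : ℕ | w (i + 1) < w i}

/-- `δ(w) = 1` if every position attaining `max(L(w))` is at or before the first descent,
and `δ(w) = 0` otherwise. -/
noncomputable def delta (w : Equiv.Perm ℕ) : ℤ :=
  if ∀ i : ℕ, lehmer w i = maxLehmer w → i ≤ firstDescent w then 1 else 0

/-- `η(w) = inv(w) − max(L(w)) + δ(w) − min{i : w_i > w_{i+1}}`. -/
noncomputable def eta (w : Equiv.Perm ℕ) : ℤ :=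
  (invCount w : ℤ) - (maxLehmer w : ℤ) + delta w - ((firstDescent w : ℤ) + 1)

/-- The decomposition of a list into maximal strictly increasing runs. -/
def runsStrict : List ℕ → List (List ℕ)
  | [] => []
  | x :: rest =>
    match runsStrict rest, rest with
    | r :: rs, y :: _ => if x < y then (x :: r) :: rs else [x] :: r :: rs
    | _, _ => [[x]]

/-- The descent composition of a word: lengths of its maximal increasing runs, a new run
beginning whenever a letter is followed by a weakly smaller letter. -/
def desStrict (l : List ℕ) : List ℕ := (runsStrict l).map List.length

/-- The decomposition of a list into maximal weakly increasing runs. -/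
def runsWeak : List ℕ → List (List ℕ)
  | [] => []
  | x :: rest =>
    match runsWeak rest, rest with
    | r :: rs, y :: _ => if x ≤ y then (x :: r) :: rs else [x] :: r :: rs
    | _, _ => [[x]]

/-- The descent composition of a word: the lengths of its maximal weakly increasing runs. -/
def desComp (l : List ℕ) : List ℕ := (runsWeak l).map List.length

/-- The permutation `1^m × w`, fixing `0, …, m-1` and acting by `w` shifted by `m` above. -/
def shiftPerm (m : ℕ) (w : Equiv.Perm ℕ) : Equiv.Perm ℕ where
  toFun i := if i < m then i else w (i - m) + m
  invFun i := if i < m then i else w.symm (i - m) + m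
  left_inv i := by
    dsimp only
    by_cases h : i < m
    · simp [h]
    · have h2 : ¬ (w (i - m) + m < m) := by omega
      rw [if_neg h, if_neg h2, Nat.add_sub_cancel, Equiv.symm_apply_apply]
      omega
  right_inv i := by
    dsimp only
    by_cases h : i < m
    · simp [h]
    · have h2 : ¬ (w.symm (i - m) + m < m) := by omega
      rw [if_neg h, if_neg h2, Nat.add_sub_cancel, Equiv.apply_symm_apply]
      omega

/-- The quasi-shuffle product of two (strong) compositions, as a multiset of compositions. -/
def qShuffle : List ℕ → List ℕ → Multiset (List ℕ)
  | [], β => {β}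
  | α, [] => {α}
  | a :: α, b :: β =>
      ((qShuffle α (b :: β)).map (a :: ·)) + ((qShuffle (a :: α) β).map (b :: ·)) +
        ((qShuffle α β).map ((a + b) :: ·))
termination_by α β => α.length + β.length
decreasing_by all_goals (simp only [List.length_cons]; omega)

def shuffles : List ℕ → List ℕ → Multiset (List ℕ)
  | [], B => {B}
  | A, [] => {A}
  | x :: A, y :: B =>
      ((shuffles A (y :: B)).map (x :: ·)) + ((shuffles (x :: A) B).map (y :: ·))
termination_by A B => A.length + B.length
decreasing_by all_goals (simp only [List.length_cons]; omega)

/-- The word `(2n-1)^{a_1} (2n-3)^{a_2} ⋯ 1^{a_n}` associated to a weak composition `a`. -/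
def wordA {n : ℕ} (a : Fin n → ℕ) : List ℕ :=
  (List.ofFn (fun i : Fin n => List.replicate (a i) (2 * n - 2 * (i : ℕ) - 1))).flatten

/-- The word `(2n)^{b_1} (2n-2)^{b_2} ⋯ 2^{b_n}` associated to a weak composition `b`. -/
def wordB {n : ℕ} (b : Fin n → ℕ) : List ℕ :=
  (List.ofFn (fun i : Fin n => List.replicate (b i) (2 * n - 2 * (i : ℕ)))).flatten

/-- A list (padded with trailing zeros) dominates a weak composition of length `n`. -/
def DominatesList {n : ℕ} (l : List ℕ) (a : Fin n → ℕ) : Prop :=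
  ∀ i : Fin (n + 1), psum a (i : ℕ) ≤ ((l.take (i : ℕ)).sum)

/-- The number of letters of the `A`-word (the odd letters) in the `k`-th weakly
increasing run of `C`. -/
def runCountA (C : List ℕ) (k : Fin (runsWeak C).length) : ℕ :=
  (((runsWeak C).get k).filter (fun z => z % 2 = 1)).length

/-- The number of letters of the `B`-word (the even letters) in the `k`-th weakly
increasing run of `C`. -/
def runCountB (C : List ℕ) (k : Fin (runsWeak C).length) : ℕ :=
  (((runsWeak C).get k).filter (fun z => z % 2 = 0)).length

/-- The length of the `k`-th weakly increasing run of `C`. -/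
def runLen (C : List ℕ) (k : Fin (runsWeak C).length) : ℕ :=
  ((runsWeak C).get k).length

/-- `c = bump_{(a,b)}(C)`: the unique weak composition of length `n` obtained by inserting
zero parts into `Des(C)` so that the correspondingly placed `Des_A` and `Des_B` dominate
`a` and `b`, minimal in dominance order among all such insertions. -/
def IsBumpS {n : ℕ} (a b : Fin n → ℕ) (C : List ℕ) (c : Fin n → ℕ) : Prop :=
  ∃ ι : Fin (runsWeak C).length → Fin n, StrictMono ι ∧
    c = spread ι (runLen C) ∧
    Dominates (spread ι (runCountA C)) a ∧ Dominates (spread ι (runCountB C)) b ∧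
    ∀ ι' : Fin (runsWeak C).length → Fin n, StrictMono ι' →
      Dominates (spread ι' (runCountA C)) a → Dominates (spread ι' (runCountB C)) b →
      Dominates (spread ι' (runLen C)) c

/-- The multiplicity `[c ∣ a ⧢ b]` of `c` in the slide product of `a` and `b`: the number of
shuffles `C` of the words of `a` and `b` lying in the shuffle set `SS(a,b)` with
`bump_{(a,b)}(C) = c`. -/
noncomputable def slideMult {n : ℕ} (a b c : Fin n → ℕ) : ℕ :=
  Multiset.card ((shuffles (wordA a) (wordB b)).filter
    (fun C => DominatesList ((runsWeak C).map
        (fun r => (r.filter (fun z => z % 2 = 1)).length)) a ∧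
      DominatesList ((runsWeak C).map (fun r => (r.filter (fun z => z % 2 = 0)).length)) b ∧
      IsBumpS a b C c))

/-- Membership in the quasi-shuffle set `QSS(a,b)`: a pair `(γ_a, γ_b)` of weak compositions
of a common length at most `n` with `γ_a ≥ a`, `flat(γ_a) = flat(a)`, `γ_b ≥ b`,
`flat(γ_b) = flat(b)` (after padding with trailing zeros), and all entries of
`γ_a + γ_b` positive. -/
def InQSS {n : ℕ} (a b : Fin n → ℕ) (x : (l : ℕ) × (Fin l → ℕ) × (Fin l → ℕ)) : Prop :=
  x.1 ≤ n ∧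
  Dominates (shiftComp 0 n x.2.1) a ∧ flat x.2.1 = flat a ∧
  Dominates (shiftComp 0 n x.2.2) b ∧ flat x.2.2 = flat b ∧
  ∀ k : Fin x.1, 0 < x.2.1 k + x.2.2 k

/-- `c = bump_{(a,b)}(γ_a, γ_b)`: the unique weak composition `c` of length `n` with
`flat(c) = γ_a + γ_b` whose decomposition `c = c_a + c_b` satisfies `c_a ≥ a` and
`c_b ≥ b`, minimal in dominance order among all such compositions. -/
def IsBumpQ {n : ℕ} (a b : Fin n → ℕ) (x : (l : ℕ) × (Fin l → ℕ) × (Fin l → ℕ))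
    (c : Fin n → ℕ) : Prop :=
  ∃ ι : Fin x.1 → Fin n, StrictMono ι ∧
    c = spread ι (fun k => x.2.1 k + x.2.2 k) ∧
    Dominates (spread ι x.2.1) a ∧ Dominates (spread ι x.2.2) b ∧
    ∀ ι' : Fin x.1 → Fin n, StrictMono ι' →
      Dominates (spread ι' x.2.1) a → Dominates (spread ι' x.2.2) b →
      Dominates (spread ι' (fun k => x.2.1 k + x.2.2 k)) c

/-- The multiplicity `[c ∣ a ⧻ b]` of `c` in the quasi-slide product of `a` and `b`: the
number of pairs in the quasi-shuffle set `QSS(a,b)` whose bump is `c`. -/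
noncomputable def qsMult {n : ℕ} (a b c : Fin n → ℕ) : ℕ :=
  Nat.card {x : (l : ℕ) × (Fin l → ℕ) × (Fin l → ℕ) // InQSS a b x ∧ IsBumpQ a b x c}

/-- The Stanley symmetric function `S_w`. -/
noncomputable def StanleySym (w : Equiv.Perm ℕ) : MvPowerSeries ℕ ℤ :=
  ∑ᶠ l ∈ {l : List ℕ | wordPerm l = w ∧ IsReducedWord l}, FqsFun (desStrict l)

lemma spread_apply {l n : ℕ} {ι : Fin l → Fin n} (hι : Function.Injective ι) (g : Fin l → ℕ)
    (k : Fin l) : spread ι g (ι k) = g k := by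
  simp [spread, hι.eq_iff]

lemma spread_apply_of_notMem_range {l n : ℕ} {ι : Fin l → Fin n} (g : Fin l → ℕ) {i : Fin n}
    (hi : i ∉ Set.range ι) : spread ι g i = 0 :=
  Finset.sum_eq_zero fun k _ => if_neg fun h => hi ⟨k, h⟩

lemma spread_comp {l n : ℕ} {ι : Fin l → Fin n} (hι : Function.Injective ι) (f : Fin n → ℕ)
    (hf : ∀ i, f i ≠ 0 → i ∈ Set.range ι) : spread ι (fun k => f (ι k)) = f := by
  funext i
  by_cases hi : i ∈ Set.range ι
  · obtain ⟨k, rfl⟩ := hi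
    exact spread_apply hι _ k
  · rw [spread_apply_of_notMem_range _ hi]
    by_contra h
    exact hi (hf i (Ne.symm h))

lemma spread_injective {l n : ℕ} {ι : Fin l → Fin n} (hι : Function.Injective ι) :
    Function.Injective (spread ι) := fun g h hgh => by
  funext k
  rw [← spread_apply hι g k, hgh, spread_apply hι]

lemma spread_add {l n : ℕ} (ι : Fin l → Fin n) (g h : Fin l → ℕ) :
    spread ι (fun k => g k + h k) = spread ι g + spread ι h := by
  funext i
  simp only [spread, Pi.add_apply, ← Finset.sum_add_distrib]
  refine Finset.sum_congr rfl fun k _ => ?_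
  split_ifs <;> simp

lemma psum_spread {l n : ℕ} (ι : Fin l → Fin n) (g : Fin l → ℕ) (i : ℕ) :
    psum (spread ι g) i = ∑ k ∈ Finset.univ.filter (fun k => (ι k : ℕ) < i), g k := by
  simp only [psum, spread]
  rw [Finset.sum_comm, Finset.sum_filter]
  refine Finset.sum_congr rfl fun k _ => ?_
  rw [Finset.sum_ite_eq]
  simp

lemma Dominates.trans {n : ℕ} {a b c : Fin n → ℕ} (h : Dominates c b) (h' : Dominates b a) :
    Dominates c a := fun i => (h' i).trans (h i)

lemma psum_succ {n : ℕ} (a : Fin n → ℕ) (i : Fin n) : psum a (i + 1) = psum a i + a i := by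
  have : Finset.univ.filter (fun j : Fin n => (j : ℕ) < i + 1)
      = insert i (Finset.univ.filter (fun j : Fin n => (j : ℕ) < i)) := by
    ext j
    simp only [Finset.mem_filter, Finset.mem_univ, true_and, Finset.mem_insert, Fin.ext_iff]
    omega
  rw [psum, this, Finset.sum_insert (by simp), add_comm, psum]

lemma Dominates.antisymm {n : ℕ} {a b : Fin n → ℕ} (h : Dominates a b) (h' : Dominates b a) :
    a = b := by
  funext i
  have h₁ := le_antisymm (h i.castSucc) (h' i.castSucc)
  have h₂ := le_antisymm (h i.succ) (h' i.succ)
  simp only [Fin.val_castSucc, Fin.val_succ, psum_succ] at h₁ h₂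
  omega

lemma dominates_spread_of_le {l n : ℕ} {ι ι' : Fin l → Fin n} (h : ι ≤ ι') (g : Fin l → ℕ) :
    Dominates (spread ι g) (spread ι' g) := fun i => by
  rw [psum_spread, psum_spread]
  refine Finset.sum_le_sum_of_subset fun k hk => ?_
  simp only [Finset.mem_filter, Finset.mem_univ, true_and] at hk ⊢
  exact lt_of_le_of_lt (h k) hk

lemma le_of_dominates_spread {l n : ℕ} {ι ι' : Fin l → Fin n} (hι : StrictMono ι)
    (hι' : StrictMono ι') {g : Fin l → ℕ} (hg : ∀ k, 0 < g k)
    (h : Dominates (spread ι g) (spread ι' g)) : ι ≤ ι' := by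
  intro k
  by_contra! hk
  have := h (ι' k).succ
  rw [psum_spread, psum_spread] at this
  refine absurd this (not_le.2 (Finset.sum_lt_sum_of_subset (i := k) (fun j hj => ?_) ?_ ?_ (hg k)
    fun _ _ _ => Nat.zero_le _))
  · simp only [Finset.mem_filter, Finset.mem_univ, true_and, Fin.val_succ, Nat.lt_succ_iff,
      Fin.val_fin_le] at hj ⊢
    exact hι'.monotone (hι.lt_iff_lt.1 (hj.trans_lt hk)).le
  · simp
  · simpa using hk

lemma dominates_spread_sup {l n : ℕ} {ι ι' : Fin l → Fin n} (hι : StrictMono ι)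
    (hι' : StrictMono ι') {g : Fin l → ℕ} {a : Fin n → ℕ} (h : Dominates (spread ι g) a)
    (h' : Dominates (spread ι' g) a) : Dominates (spread (ι ⊔ ι') g) a := fun i => by
  rw [psum_spread]
  by_cases hi : ∀ k, (ι k : ℕ) < i → (ι' k : ℕ) < i
  · refine (h i).trans ?_
    rw [psum_spread]
    refine Finset.sum_le_sum_of_subset fun k hk => ?_
    simp only [Finset.mem_filter, Finset.mem_univ, true_and, Pi.sup_apply] at hk ⊢
    rcases max_choice (ι k) (ι' k) with e | e <;> rw [e]
    exacts [hk, hi k hk]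
  · push Not at hi
    obtain ⟨m, hm, hm'⟩ := hi
    refine (h' i).trans ?_
    rw [psum_spread]
    refine Finset.sum_le_sum_of_subset fun k hk => ?_
    simp only [Finset.mem_filter, Finset.mem_univ, true_and, Pi.sup_apply] at hk ⊢
    have hkm : k < m := hι'.lt_iff_lt.1 (Fin.lt_def.2 (hk.trans_le hm'))
    rcases max_choice (ι k) (ι' k) with e | e <;> rw [e]
    exacts [(Fin.lt_def.1 (hι hkm)).trans hm, hk]

lemma flat_eq_map {n : ℕ} (a : Fin n → ℕ) :
    flat a = ((List.finRange n).filter (fun i => a i ≠ 0)).map a := by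
  rw [flat, List.ofFn_eq_map, List.filter_map]
  rfl

lemma flat_spread {l n : ℕ} {ι : Fin l → Fin n} (hι : StrictMono ι) (g : Fin l → ℕ) :
    flat (spread ι g) = flat g := by
  have h : (List.finRange n).filter (fun i => spread ι g i ≠ 0)
      = ((List.finRange l).filter (fun k => g k ≠ 0)).map ι := by
    refine List.Pairwise.eq_of_mem_iff (r := (· < ·))
      ((List.pairwise_lt_finRange n).filter _)
      (List.Pairwise.map ι (fun _ _ h => hι h) ((List.pairwise_lt_finRange l).filter _)) ?_
    intro i
    simp only [List.mem_filter, List.mem_finRange, true_and, decide_eq_true_eq, List.mem_map]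
    constructor
    · intro hi
      by_cases hr : i ∈ Set.range ι
      · obtain ⟨k, rfl⟩ := hr
        exact ⟨k, by rwa [spread_apply hι.injective] at hi, rfl⟩
      · exact absurd (spread_apply_of_notMem_range g hr) hi
    · rintro ⟨k, hk, rfl⟩
      rwa [spread_apply hι.injective]
  rw [flat_eq_map, flat_eq_map g, h, List.map_map]
  exact List.map_congr_left fun k _ => spread_apply hι.injective g k

lemma flat_of_pos {n : ℕ} {a : Fin n → ℕ} (ha : ∀ i, 0 < a i) : flat a = List.ofFn a := by
  rw [flat, List.filter_eq_self]
  intro x hx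
  obtain ⟨i, rfl⟩ := (List.mem_ofFn' _ _).1 hx
  simpa using (ha i).ne'

lemma sum_flat {n : ℕ} (a : Fin n → ℕ) : (flat a).sum = ∑ i, a i := by
  rw [← List.sum_ofFn, flat]
  induction List.ofFn a with
  | nil => rfl
  | cons x t ih => by_cases hx : x = 0 <;> simp_all

lemma mem_wcFinset_of_flat_eq {m n : ℕ} {a : Fin m → ℕ} {b : Fin n → ℕ} (h : flat b = flat a) :
    b ∈ wcFinset n (∑ i, a i) := by
  rw [← sum_flat a, ← h, sum_flat]
  simp only [wcFinset, Fintype.mem_piFinset, Finset.mem_range, Nat.lt_succ_iff]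
  exact fun i => Finset.single_le_sum (fun _ _ => Nat.zero_le _) (Finset.mem_univ i)

lemma mem_slideM_index {n : ℕ} {a b : Fin n → ℕ} :
    b ∈ (wcFinset n (∑ i, a i)).filter (fun b => Dominates b a ∧ flat b = flat a) ↔
      Dominates b a ∧ flat b = flat a := by
  rw [Finset.mem_filter, and_iff_right_iff_imp]
  exact fun h => mem_wcFinset_of_flat_eq h.2

lemma exists_strictMono_range_eq {n : ℕ} (s : Finset (Fin n)) :
    ∃ ι : Fin s.card → Fin n, StrictMono ι ∧ Set.range ι = s :=
  ⟨s.orderEmbOfFin rfl, (s.orderEmbOfFin rfl).strictMono, s.range_orderEmbOfFin rfl⟩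

lemma exists_spread_eq_of_flat_eq {l n : ℕ} {g : Fin l → ℕ} (hg : ∀ k, 0 < g k) {d : Fin n → ℕ}
    (h : flat d = flat g) : ∃ ι : Fin l → Fin n, StrictMono ι ∧ spread ι g = d := by
  obtain ⟨ι, hι, hr⟩ := exists_strictMono_range_eq (Finset.univ.filter (fun i => d i ≠ 0))
  have hd : spread ι (fun k => d (ι k)) = d :=
    spread_comp hι.injective d fun i hi => by simpa [hr] using hi
  have hpos : ∀ k, 0 < d (ι k) := fun k => by
    have : ι k ∈ Set.range ι := ⟨k, rfl⟩
    rw [hr] at this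
    simpa [Nat.pos_iff_ne_zero] using this
  rw [← hd, flat_spread hι, flat_of_pos hpos, flat_of_pos hg] at h
  generalize (Finset.univ.filter (fun i => d i ≠ 0)).card = m at *
  have hl : m = l := by simpa using congrArg List.length h
  subst hl
  refine ⟨ι, hι, ?_⟩
  rw [← List.ofFn_injective h, hd]

lemma shiftComp_zero {l n : ℕ} (h : l ≤ n) (g : Fin l → ℕ) :
    shiftComp 0 n g = spread (Fin.castLE h) g := by
  funext i
  by_cases hi : (i : ℕ) < l
  · have : i = Fin.castLE h ⟨i, hi⟩ := rfl
    rw [this, spread_apply (Fin.castLE_injective h)]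
    simp [shiftComp, hi]
  · rw [spread_apply_of_notMem_range]
    · simp [shiftComp, hi]
    · rintro ⟨k, rfl⟩
      exact hi k.2

lemma castLE_le_of_strictMono {l n : ℕ} (h : l ≤ n) {ι : Fin l → Fin n} (hι : StrictMono ι) :
    Fin.castLE h ≤ ι := by
  rintro ⟨k, hk⟩
  rw [Fin.le_def, Fin.val_castLE]
  induction k with
  | zero => exact Nat.zero_le _
  | succ k ih =>
    have h₁ := ih (by omega)
    have h₂ : ι ⟨k, by omega⟩ < ι ⟨k + 1, hk⟩ := hι (Fin.lt_def.2 (Nat.lt_succ_self k))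
    rw [Fin.lt_def] at h₂
    simp only at h₁ ⊢
    omega

/-- The ways to insert zeros into the pair `x` so that its components dominate `a` and `b`. -/
noncomputable def insertions {n : ℕ} (a b : Fin n → ℕ)
    (x : (l : ℕ) × (Fin l → ℕ) × (Fin l → ℕ)) : Finset (Fin x.1 → Fin n) :=
  Finset.univ.filter fun ι => StrictMono ι ∧
    Dominates (spread ι x.2.1) a ∧ Dominates (spread ι x.2.2) b

lemma mem_insertions {n : ℕ} {a b : Fin n → ℕ} {x : (l : ℕ) × (Fin l → ℕ) × (Fin l → ℕ)}
    {ι : Fin x.1 → Fin n} : ι ∈ insertions a b x ↔ StrictMono ι ∧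
      Dominates (spread ι x.2.1) a ∧ Dominates (spread ι x.2.2) b := by
  simp [insertions]

lemma inQSS_of_mem_insertions {n : ℕ} {a b : Fin n → ℕ}
    {x : (l : ℕ) × (Fin l → ℕ) × (Fin l → ℕ)} {ι : Fin x.1 → Fin n} (hι : ι ∈ insertions a b x)
    (ha : flat (spread ι x.2.1) = flat a) (hb : flat (spread ι x.2.2) = flat b)
    (hpos : ∀ k, 0 < x.2.1 k + x.2.2 k) : InQSS a b x := by
  obtain ⟨hm, h₁, h₂⟩ := mem_insertions.1 hι
  have hl : x.1 ≤ n := by simpa using Fintype.card_le_of_injective ι hm.injective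
  rw [flat_spread hm] at ha hb
  refine ⟨hl, ?_, ha, ?_, hb, hpos⟩ <;> rw [shiftComp_zero hl]
  exacts [(dominates_spread_of_le (castLE_le_of_strictMono hl hm) _).trans h₁,
    (dominates_spread_of_le (castLE_le_of_strictMono hl hm) _).trans h₂]

lemma exists_isGreatest_insertions {n : ℕ} {a b : Fin n → ℕ}
    {x : (l : ℕ) × (Fin l → ℕ) × (Fin l → ℕ)} (hx : InQSS a b x) :
    ∃ ι, IsGreatest (insertions a b x : Set (Fin x.1 → Fin n)) ι := by
  obtain ⟨hl, ha, -, hb, -, -⟩ := hx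
  rw [shiftComp_zero hl] at ha hb
  have hne : (insertions a b x).Nonempty :=
    ⟨Fin.castLE hl, mem_insertions.2 ⟨Fin.strictMono_castLE hl, ha, hb⟩⟩
  refine ⟨(insertions a b x).sup' hne id, ?_, fun ι hι => Finset.le_sup' id hι⟩
  refine Finset.sup'_mem _ (fun ι hι ι' hι' => ?_) _ hne id fun ι hι => hι
  obtain ⟨hm, h₁, h₂⟩ := mem_insertions.1 hι
  obtain ⟨hm', h₁', h₂'⟩ := mem_insertions.1 hι'
  exact mem_insertions.2 ⟨fun i j hij => max_lt_max (hm hij) (hm' hij),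
    dominates_spread_sup hm hm' h₁ h₁', dominates_spread_sup hm hm' h₂ h₂'⟩

lemma exists_isBumpQ {n : ℕ} {a b : Fin n → ℕ}
    {x : (l : ℕ) × (Fin l → ℕ) × (Fin l → ℕ)} (hx : InQSS a b x) : ∃ c, IsBumpQ a b x c := by
  obtain ⟨ι, hι, hmax⟩ := exists_isGreatest_insertions hx
  obtain ⟨hm, h₁, h₂⟩ := mem_insertions.1 hι
  exact ⟨_, ι, hm, rfl, h₁, h₂, fun ι' hm' h₁' h₂' =>
    dominates_spread_of_le (hmax (mem_insertions.2 ⟨hm', h₁', h₂'⟩)) _⟩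

lemma IsBumpQ.unique {n : ℕ} {a b c c' : Fin n → ℕ}
    {x : (l : ℕ) × (Fin l → ℕ) × (Fin l → ℕ)} (h : IsBumpQ a b x c) (h' : IsBumpQ a b x c') :
    c = c' := by
  obtain ⟨ι, hm, rfl, h₁, h₂, hmin⟩ := h
  obtain ⟨ι', hm', rfl, h₁', h₂', hmin'⟩ := h'
  refine Dominates.antisymm (hmin' ι hm h₁ h₂) ?_
  apply hmin <;> assumption

/-- The monomial slide polynomial of a bump is the generating function of all insertions. -/
lemma slideM_of_isBumpQ {n : ℕ} {a b c : Fin n → ℕ}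
    {x : (l : ℕ) × (Fin l → ℕ) × (Fin l → ℕ)} (hx : InQSS a b x) (hc : IsBumpQ a b x c) :
    slideM c = ∑ ι ∈ insertions a b x, MvPolynomial.monomial
      (Finsupp.equivFunOnFinite.symm (spread ι x.2.1 + spread ι x.2.2)) 1 := by
  obtain ⟨ι₀, hm₀, rfl, h₁, h₂, hmin⟩ := hc
  have hpos := hx.2.2.2.2.2
  rw [slideM]
  symm
  refine Finset.sum_bij (fun ι _ => spread ι (fun k => x.2.1 k + x.2.2 k))
    (fun ι hι => ?_) (fun ι hι ι' hι' h => ?_) (fun d hd => ?_) fun ι hι => ?_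
  · obtain ⟨hm, h₁', h₂'⟩ := mem_insertions.1 hι
    exact mem_slideM_index.2 ⟨hmin ι hm h₁' h₂', by rw [flat_spread hm, flat_spread hm₀]⟩
  · have hm := (mem_insertions.1 hι).1
    have hm' := (mem_insertions.1 hι').1
    refine le_antisymm (le_of_dominates_spread hm hm' hpos ?_)
      (le_of_dominates_spread hm' hm hpos ?_) <;> rw [h] <;> exact fun _ => le_rfl
  · obtain ⟨hd, hf⟩ := mem_slideM_index.1 hd
    rw [flat_spread hm₀] at hf
    obtain ⟨ι, hm, rfl⟩ := exists_spread_eq_of_flat_eq hpos hf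
    have hle := le_of_dominates_spread hm hm₀ hpos hd
    exact ⟨ι, mem_insertions.2 ⟨hm, (dominates_spread_of_le hle _).trans h₁,
      (dominates_spread_of_le hle _).trans h₂⟩, rfl⟩
  · rw [spread_add]

lemma finite_setOf_inQSS {n : ℕ} (a b : Fin n → ℕ) : {x | InQSS a b x}.Finite := by
  refine (((Finset.range (n + 1)).sigma fun l =>
    wcFinset l (∑ i, a i) ×ˢ wcFinset l (∑ i, b i)).finite_toSet).subset ?_
  rintro ⟨l, g, h⟩ ⟨hl, -, hg, -, hh, -⟩
  simp only [Finset.coe_sigma, Set.mem_sigma_iff, Finset.mem_coe, Finset.mem_range,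
    Finset.mem_product]
  exact ⟨Nat.lt_succ_iff.2 hl, mem_wcFinset_of_flat_eq hg, mem_wcFinset_of_flat_eq hh⟩

lemma range_eq_of_spread {l n : ℕ} {ι : Fin l → Fin n} (hι : StrictMono ι) {g h : Fin l → ℕ}
    (hpos : ∀ k, 0 < g k + h k) : Set.range ι = {i | (spread ι g + spread ι h) i ≠ 0} := by
  ext i
  rw [← spread_add]
  constructor
  · rintro ⟨k, rfl⟩
    rw [Set.mem_ofPred_eq, spread_apply hι.injective]
    exact (hpos k).ne'
  · intro hi
    by_contra hr
    exact hi (spread_apply_of_notMem_range _ hr)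

/-- Pairs of terms of `𝔐_a` and `𝔐_b` are the insertions of the quasi-shuffles. -/
lemma slideM_mul_eq_sum_insertions {n : ℕ} (a b : Fin n → ℕ) :
    slideM a * slideM b = ∑ x ∈ (finite_setOf_inQSS a b).toFinset, ∑ ι ∈ insertions a b x,
      MvPolynomial.monomial
        (Finsupp.equivFunOnFinite.symm (spread ι x.2.1 + spread ι x.2.2)) 1 := by
  rw [slideM, slideM, Finset.sum_mul_sum, ← Finset.sum_product', Finset.sum_sigma']
  symm
  refine Finset.sum_bij (fun p _ => (spread p.2 p.1.2.1, spread p.2 p.1.2.2)) ?_ ?_ ?_ ?_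
  · rintro ⟨x, ι⟩ hp
    simp only [Finset.mem_sigma, Set.Finite.mem_toFinset, Set.mem_ofPred_eq] at hp
    obtain ⟨⟨-, -, ha, -, hb, -⟩, hι⟩ := hp
    obtain ⟨hm, h₁, h₂⟩ := mem_insertions.1 hι
    exact Finset.mem_product.2 ⟨mem_slideM_index.2 ⟨h₁, by rw [flat_spread hm, ha]⟩,
      mem_slideM_index.2 ⟨h₂, by rw [flat_spread hm, hb]⟩⟩
  · rintro ⟨⟨l, g, h⟩, ι⟩ hp ⟨⟨l', g', h'⟩, ι'⟩ hp' heq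
    simp only [Finset.mem_sigma, Set.Finite.mem_toFinset, Set.mem_ofPred_eq] at hp hp'
    simp only [Prod.mk.injEq] at heq
    have hm := (mem_insertions.1 hp.2).1
    have hm' := (mem_insertions.1 hp'.2).1
    have hr : Set.range ι = Set.range ι' := by
      rw [range_eq_of_spread hm hp.1.2.2.2.2.2, range_eq_of_spread hm' hp'.1.2.2.2.2.2]
      simp only [heq.1, heq.2]
    have hl : l = l' := by
      have := congrArg Set.ncard hr
      rw [← Set.image_univ, ← Set.image_univ, Set.ncard_image_of_injective _ hm.injective,
        Set.ncard_image_of_injective _ hm'.injective] at this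
      simpa using this
    subst hl
    obtain rfl : ι = ι' := (StrictMono.range_inj hm hm').1 hr
    obtain rfl := spread_injective hm.injective heq.1
    obtain rfl := spread_injective hm.injective heq.2
    rfl
  · rintro ⟨a', b'⟩ hp
    obtain ⟨ha, hb⟩ := Finset.mem_product.1 hp
    obtain ⟨ha, hfa⟩ := mem_slideM_index.1 ha
    obtain ⟨hb, hfb⟩ := mem_slideM_index.1 hb
    obtain ⟨ι, hι, hr⟩ :=
      exists_strictMono_range_eq (Finset.univ.filter (fun i => a' i + b' i ≠ 0))
    have hra : spread ι (fun k => a' (ι k)) = a' := spread_comp hι.injective a' fun i hi => by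
      rw [hr]
      simp only [Finset.coe_filter, Finset.mem_univ, true_and, Set.mem_ofPred_eq]
      omega
    have hrb : spread ι (fun k => b' (ι k)) = b' := spread_comp hι.injective b' fun i hi => by
      rw [hr]
      simp only [Finset.coe_filter, Finset.mem_univ, true_and, Set.mem_ofPred_eq]
      omega
    have hpos : ∀ k, 0 < a' (ι k) + b' (ι k) := fun k => by
      have : ι k ∈ Set.range ι := ⟨k, rfl⟩
      rw [hr] at this
      simp only [Finset.coe_filter, Finset.mem_univ, true_and, Set.mem_ofPred_eq] at this
      omega
    have hmem : ι ∈ insertions a b ⟨_, fun k => a' (ι k), fun k => b' (ι k)⟩ :=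
      mem_insertions.2 ⟨hι, by rwa [hra], by rwa [hrb]⟩
    refine ⟨⟨⟨_, fun k => a' (ι k), fun k => b' (ι k)⟩, ι⟩, ?_, Prod.ext hra hrb⟩
    refine Finset.mem_sigma.2 ⟨?_, hmem⟩
    rw [Set.Finite.mem_toFinset]
    exact inQSS_of_mem_insertions hmem (by rw [hra, hfa]) (by rw [hrb, hfb]) hpos
  · rintro ⟨x, ι⟩ -
    rw [MvPolynomial.monomial_mul, one_mul]
    congr 2
    ext i
    simp

/-- the structure constants of the monomial slide polynomials are given by
the quasi-slide product: `𝔐_a · 𝔐_b = Σ_c [c ∣ a ⧻ b] 𝔐_c`. -/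
theorem monomialSlide_mul (n : ℕ) (a b : Fin n → ℕ) :
    slideM a * slideM b = ∑ᶠ c : Fin n → ℕ, (qsMult a b c : ℤ) • slideM c := by
  have hbump : ∀ x, ∃ c, InQSS a b x → IsBumpQ a b x c := fun x => by
    by_cases hx : InQSS a b x
    · exact (exists_isBumpQ hx).imp fun c hc _ => hc
    · exact ⟨a, fun h => absurd h hx⟩
  choose B hB using hbump
  have hmult : ∀ c, qsMult a b c
      = ((finite_setOf_inQSS a b).toFinset.filter (fun x => B x = c)).card := fun c => by
    rw [qsMult, Nat.subtype_card]
    intro x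
    rw [Finset.mem_filter, Set.Finite.mem_toFinset, Set.mem_ofPred_eq]
    refine and_congr_right fun hx => ⟨fun h => h ▸ hB x hx, fun h => (hB x hx).unique h⟩
  rw [slideM_mul_eq_sum_insertions, finsum_eq_sum_of_support_subset
    (s := (finite_setOf_inQSS a b).toFinset.image B)]
  · simp only [hmult, natCast_zsmul]
    rw [← Finset.sum_comp slideM B]
    refine Finset.sum_congr rfl fun x hx => ?_
    have hx' : InQSS a b x := by simpa using hx
    exact (slideM_of_isBumpQ hx' (hB x hx')).symm
  · intro c hc
    by_contra hmem
    refine hc ?_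
    have : qsMult a b c = 0 := by
      rw [hmult, Finset.card_eq_zero, Finset.filter_eq_empty_iff]
      exact fun x hx h => hmem (Finset.mem_coe.2 (Finset.mem_image.2 ⟨x, hx, h⟩))
    simp [this]

end SlidePaper
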